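/- Let N be a finite set and f : 2^N → ℝ a submodular set function with f(∅) = 0. Then π ∈ ℝ^N is an extreme point of P_f if and only if there is an enumeration e_1, …, e_n of N such that π_{e_i} = f(S_i) − f(S_{i−1}) for all i, where S_0 = ∅ and S_i = {e_1, …, e_i}; i.e., the extreme points of the extended polymatroid P_f are exactly the greedy vectors. (Edmonds' characterization, used in the proof of Proposition 4.) -/

import Mathlib

/-!
Call a set `S` *tight* for a point `π` of `P_f` if `π(S) = f(S)`.

A greedy vector makes every prefix `S_k` tight. It lies in `P_f` because submodularity, applied to
`S ∩ S_{k+1}` and `S_k`, bounds each increment of `π(S ∩ S_k)` by that of `f(S ∩ S_k)`; it is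
extreme because the prefix equations are inherited by both ends of any segment in `P_f` through
it, and they determine the vector (`eq_of_sum_prefixSet_eq`).

Conversely, let `π` be extreme. Tight sets are closed under union and intersection, and a direction
`d` with `d(S) = 0` on every tight set must vanish (`eq_zero_of_sum_tight_eq_zero`), as otherwise
`π ± ε d` would both be feasible. Unit vectors and differences of two of them show that tight sets
cover `N` and separate its elements. Hence a minimal tight set strictly containing a tight `S ≠ N`
has just one more element (`exists_insert_tight`), so there is a maximal chain of tight sets from
`∅` to `N`, and `π` is the greedy vector of the enumeration it defines.
-/

/-- `prefixSet e k` is the set `S_k = {e_1, …, e_k}` of the first `k` elements of the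
enumeration `e` of the ground set. -/
def prefixSet {α : Type*} [DecidableEq α] {n : ℕ} (e : Fin n ≃ α) (k : ℕ) : Finset α :=
  (Finset.univ.filter (fun j : Fin n => (j : ℕ) < k)).image e

section Prefix

variable {α : Type*} [DecidableEq α] {n : ℕ}

lemma mem_prefixSet (e : Fin n ≃ α) (k : ℕ) (a : α) :
    a ∈ prefixSet e k ↔ (e.symm a : ℕ) < k := by
  simp only [prefixSet, Finset.mem_image, Finset.mem_filter, Finset.mem_univ, true_and]
  constructor
  · rintro ⟨j, hj, rfl⟩
    simpa using hj
  · intro h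
    exact ⟨e.symm a, h, by simp⟩

lemma prefixSet_zero (e : Fin n ≃ α) : prefixSet e 0 = ∅ := by
  ext a
  simp [mem_prefixSet]

lemma notMem_prefixSet (e : Fin n ≃ α) (i : Fin n) : e i ∉ prefixSet e (i : ℕ) := by
  simp [mem_prefixSet]

lemma prefixSet_succ (e : Fin n ≃ α) (i : Fin n) :
    prefixSet e ((i : ℕ) + 1) = insert (e i) (prefixSet e (i : ℕ)) := by
  ext a
  rw [Finset.mem_insert, mem_prefixSet, mem_prefixSet, ← Equiv.symm_apply_eq, Fin.ext_iff]
  omega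

lemma sum_prefixSet_succ (e : Fin n ≃ α) (i : Fin n) (p : α → ℝ) :
    ∑ a ∈ prefixSet e ((i : ℕ) + 1), p a = p (e i) + ∑ a ∈ prefixSet e (i : ℕ), p a := by
  rw [prefixSet_succ, Finset.sum_insert (notMem_prefixSet e i)]

/-- The prefix sums along an enumeration determine a vector. -/
lemma eq_of_sum_prefixSet_eq (e : Fin n ≃ α) {p q : α → ℝ}
    (h : ∀ k ≤ n, ∑ a ∈ prefixSet e k, p a = ∑ a ∈ prefixSet e k, q a) : p = q := by
  funext a
  obtain ⟨i, rfl⟩ := e.surjective a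
  have h1 := h (i + 1) i.isLt
  have h2 := h i i.isLt.le
  rw [sum_prefixSet_succ, sum_prefixSet_succ] at h1
  linarith

/-- The prefixes of a greedy vector are tight. -/
lemma sum_prefixSet_of_greedy (f : Finset α → ℝ) (hf : f ∅ = 0) (e : Fin n ≃ α) (π : α → ℝ)
    (h : ∀ i : Fin n, π (e i) = f (prefixSet e ((i : ℕ) + 1)) - f (prefixSet e (i : ℕ))) :
    ∀ k ≤ n, ∑ a ∈ prefixSet e k, π a = f (prefixSet e k) := by
  intro k
  induction k with
  | zero => simp [prefixSet_zero, hf]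
  | succ k ih =>
    intro hk
    have h1 := sum_prefixSet_succ e ⟨k, hk⟩ π
    have h2 := h ⟨k, hk⟩
    have h3 := ih (by omega)
    simp only at h1 h2
    linarith

/-- A greedy vector satisfies all constraints, seen by induction on the sets `S ∩ S_k`. -/
lemma sum_le_of_greedy (f : Finset α → ℝ) (hf : f ∅ = 0)
    (hsub : ∀ S T : Finset α, f (S ∪ T) + f (S ∩ T) ≤ f S + f T) (e : Fin n ≃ α) (π : α → ℝ)
    (h : ∀ i : Fin n, π (e i) = f (prefixSet e ((i : ℕ) + 1)) - f (prefixSet e (i : ℕ)))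
    (S : Finset α) : ∑ a ∈ S, π a ≤ f S := by
  have key : ∀ k ≤ n, ∑ a ∈ S ∩ prefixSet e k, π a ≤ f (S ∩ prefixSet e k) := by
    intro k
    induction k with
    | zero => simp [prefixSet_zero, hf]
    | succ k ih =>
      intro hk
      have h1 := prefixSet_succ e ⟨k, hk⟩
      have h2 := h ⟨k, hk⟩
      have h3 := ih (by omega)
      have h4 := notMem_prefixSet e ⟨k, hk⟩
      simp only at h1 h2 h4
      by_cases hS : e ⟨k, hk⟩ ∈ S
      · have hA : S ∩ prefixSet e (k + 1) = insert (e ⟨k, hk⟩) (S ∩ prefixSet e k) := by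
          rw [h1, Finset.inter_insert_of_mem hS]
        have hU : S ∩ prefixSet e (k + 1) ∪ prefixSet e k = prefixSet e (k + 1) := by
          rw [hA, h1, Finset.insert_union, Finset.union_eq_right.2 Finset.inter_subset_right]
        have hI : S ∩ prefixSet e (k + 1) ∩ prefixSet e k = S ∩ prefixSet e k := by
          rw [h1]
          ext a
          simp only [Finset.mem_inter, Finset.mem_insert]
          tauto
        have h5 := hsub (S ∩ prefixSet e (k + 1)) (prefixSet e k)
        rw [hU, hI] at h5
        have h6 : ∑ a ∈ S ∩ prefixSet e (k + 1), π a
            = π (e ⟨k, hk⟩) + ∑ a ∈ S ∩ prefixSet e k, π a := by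
          rw [hA, Finset.sum_insert (by simp [h4])]
        linarith
      · rwa [h1, Finset.inter_insert_of_notMem hS]
  have hn : S ∩ prefixSet e n = S :=
    Finset.inter_eq_left.2 fun a _ => (mem_prefixSet e n a).2 (e.symm a).isLt
  simpa [hn] using key n le_rfl

end Prefix

/-- Tight sets form a lattice: their union and intersection are tight. -/
lemma tight_union_inter {α : Type*} [DecidableEq α] (f : Finset α → ℝ)
    (hsub : ∀ S T : Finset α, f (S ∪ T) + f (S ∩ T) ≤ f S + f T) {π : α → ℝ}
    (hπ : ∀ S : Finset α, ∑ i ∈ S, π i ≤ f S) {S T : Finset α}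
    (hS : ∑ i ∈ S, π i = f S) (hT : ∑ i ∈ T, π i = f T) :
    ∑ i ∈ S ∪ T, π i = f (S ∪ T) ∧ ∑ i ∈ S ∩ T, π i = f (S ∩ T) := by
  have h1 := hsub S T
  have h2 := hπ (S ∪ T)
  have h3 := hπ (S ∩ T)
  have h4 := Finset.sum_union_inter (s₁ := S) (s₂ := T) (f := π)
  constructor <;> linarith

/-- The tight constraints at an extreme point have full rank. -/
lemma eq_zero_of_sum_tight_eq_zero {α : Type*} [Fintype α] (f : Finset α → ℝ) {π : α → ℝ}
    (hext : π ∈ Set.extremePoints ℝ {p : α → ℝ | ∀ S : Finset α, ∑ i ∈ S, p i ≤ f S})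
    (d : α → ℝ) (hd : ∀ S : Finset α, ∑ i ∈ S, π i = f S → ∑ i ∈ S, d i = 0) : d = 0 := by
  obtain ⟨hπ, hex⟩ := hext
  -- A step `ε` small enough for the finitely many slack constraints.
  have hev : ∀ᶠ ε : ℝ in nhdsWithin 0 (Set.Ioi 0), ∀ S : Finset α,
      ε * |∑ i ∈ S, d i| ≤ f S - ∑ i ∈ S, π i := by
    rw [Filter.eventually_all]
    intro S
    rcases (hπ S).eq_or_lt with h | h
    · simp [hd S h, h]
    · have hc : Filter.Tendsto (fun ε : ℝ => ε * |∑ i ∈ S, d i|)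
          (nhdsWithin 0 (Set.Ioi 0)) (nhds 0) := by
        have : Continuous (fun ε : ℝ => ε * |∑ i ∈ S, d i|) := by fun_prop
        simpa using (this.tendsto 0).mono_left nhdsWithin_le_nhds
      exact (hc.eventually (gt_mem_nhds (sub_pos.2 h))).mono fun _ => le_of_lt
  obtain ⟨ε, hε, hpos⟩ := (hev.and self_mem_nhdsWithin).exists
  have hpos : 0 < ε := hpos
  have hmem : ∀ c : ℝ, |c| = ε → π + c • d ∈
      {p : α → ℝ | ∀ S : Finset α, ∑ i ∈ S, p i ≤ f S} := by
    intro c hc S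
    have h1 : ∑ i ∈ S, (π + c • d) i = ∑ i ∈ S, π i + c * ∑ i ∈ S, d i := by
      simp [Finset.sum_add_distrib, Finset.mul_sum]
    have h2 := le_abs_self (c * ∑ i ∈ S, d i)
    rw [abs_mul, hc] at h2
    linarith [hε S]
  have hseg : π ∈ openSegment ℝ (π + ε • d) (π + (-ε) • d) := by
    refine ⟨1 / 2, 1 / 2, by norm_num, by norm_num, by norm_num, ?_⟩
    module
  have h := hex (hmem ε (abs_of_pos hpos)) (hmem (-ε) (by rw [abs_neg, abs_of_pos hpos])) hseg
  have h0 : ε • d = 0 := by simpa using h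
  exact (smul_eq_zero.1 h0).resolve_left (ne_of_gt hpos)

/-- A tight set other than the whole ground set can be enlarged by one element to a tight set. -/
lemma exists_insert_tight {α : Type*} [DecidableEq α] [Fintype α] (f : Finset α → ℝ) (hf : f ∅ = 0)
    (hsub : ∀ S T : Finset α, f (S ∪ T) + f (S ∩ T) ≤ f S + f T) {π : α → ℝ}
    (hext : π ∈ Set.extremePoints ℝ {p : α → ℝ | ∀ S : Finset α, ∑ i ∈ S, p i ≤ f S})
    {S : Finset α} (hS : ∑ i ∈ S, π i = f S) (hne : S ≠ Finset.univ) :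
    ∃ a ∉ S, ∑ i ∈ insert a S, π i = f (insert a S) := by
  have hπ : ∀ S : Finset α, ∑ i ∈ S, π i ≤ f S := hext.1
  have hcover : ∀ a : α, ∃ T : Finset α, ∑ i ∈ T, π i = f T ∧ a ∈ T := by
    intro a
    by_contra! hcon
    have h := eq_zero_of_sum_tight_eq_zero f hext (Pi.single a 1) (by
      intro T hT
      simp [hcon T hT])
    simpa using congrFun h a
  have hsep : ∀ a b : α, a ≠ b →
      ∃ T : Finset α, ∑ i ∈ T, π i = f T ∧ ¬ (a ∈ T ↔ b ∈ T) := by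
    intro a b hab
    by_contra! hcon
    have h := eq_zero_of_sum_tight_eq_zero f hext (Pi.single a 1 - Pi.single b 1) (by
      intro T hT
      have := hcon T hT
      simp [this])
    simpa [hab] using congrFun h a
  choose C hC hCmem using hcover
  have huniv : ∑ i, π i = f Finset.univ := by
    have hU : ∀ A : Finset α, ∑ i ∈ A.sup C, π i = f (A.sup C) := fun A =>
      Finset.sup_induction (p := fun T => ∑ i ∈ T, π i = f T) (by simp [hf])
        (fun _ h₁ _ h₂ => (tight_union_inter f hsub hπ h₁ h₂).1) (fun a _ => hC a)
    have : Finset.univ.sup C = Finset.univ :=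
      Finset.eq_univ_of_forall fun a => Finset.mem_sup.2 ⟨a, Finset.mem_univ a, hCmem a⟩
    simpa [this] using hU Finset.univ
  obtain ⟨T, ⟨hT, hST⟩, hmin⟩ := (Set.toFinite
    {T : Finset α | ∑ i ∈ T, π i = f T ∧ S ⊂ T}).exists_minimal
    ⟨Finset.univ, huniv, Finset.ssubset_univ_iff.2 hne⟩
  obtain ⟨a, haT, haS⟩ := Finset.exists_of_ssubset hST
  -- A tight `U` meeting `T \ S` but not containing it would give the smaller set `S ∪ (U ∩ T)`.
  have hno : ∀ x y : α, x ∈ T → x ∉ S → y ∈ T → y ∉ S → ∀ U : Finset α,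
      ∑ i ∈ U, π i = f U → x ∈ U → y ∈ U := by
    intro x y hxT hxS hyT hyS U hU hxU
    have ht := (tight_union_inter f hsub hπ hS (tight_union_inter f hsub hπ hU hT).2).1
    have hss : S ⊂ S ∪ U ∩ T :=
      Finset.ssubset_iff_of_subset Finset.subset_union_left |>.2 ⟨x, by simp [hxU, hxT], hxS⟩
    have hle : S ∪ U ∩ T ≤ T := Finset.union_subset hST.1 Finset.inter_subset_right
    have := hmin ⟨ht, hss⟩ hle hyT
    simpa [hyS, hyT] using this
  have hTeq : T = insert a S := by
    refine Finset.Subset.antisymm (fun b hb => ?_) (Finset.insert_subset haT hST.1)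
    by_contra hcon
    rw [Finset.mem_insert, not_or] at hcon
    obtain ⟨U, hU, hUab⟩ := hsep a b (Ne.symm hcon.1)
    exact hUab ⟨hno a b haT haS hb hcon.2 U hU, hno b a hb hcon.2 haT haS U hU⟩
  exact ⟨a, haS, hTeq ▸ hT⟩

/-- Chains of tight sets, recorded as lists all of whose initial segments are tight, can be
prolonged to any length up to the size of the ground set. -/
lemma exists_tight_list {α : Type*} [DecidableEq α] [Fintype α] (f : Finset α → ℝ) (hf : f ∅ = 0)
    (hsub : ∀ S T : Finset α, f (S ∪ T) + f (S ∩ T) ≤ f S + f T) {π : α → ℝ}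
    (hext : π ∈ Set.extremePoints ℝ {p : α → ℝ | ∀ S : Finset α, ∑ i ∈ S, p i ≤ f S}) :
    ∀ k ≤ Fintype.card α, ∃ l : List α, l.Nodup ∧ l.length = k ∧
      ∀ j, ∑ i ∈ (l.take j).toFinset, π i = f (l.take j).toFinset := by
  intro k
  induction k with
  | zero => exact fun _ => ⟨[], by simp, by simp, by simp [hf]⟩
  | succ k ih =>
    intro hk
    obtain ⟨l, hnd, hlen, hl⟩ := ih (by omega)
    have hne : l.toFinset ≠ Finset.univ := by
      intro h
      have h1 := List.toFinset_card_of_nodup hnd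
      rw [h, Finset.card_univ] at h1
      omega
    have hlt : ∑ i ∈ l.toFinset, π i = f l.toFinset := by simpa using hl l.length
    obtain ⟨a, ha, hat⟩ := exists_insert_tight f hf hsub hext hlt hne
    have hal : a ∉ l := by simpa using ha
    refine ⟨l ++ [a], ?_, by simp [hlen], fun j => ?_⟩
    · rw [← List.concat_eq_append]
      exact hnd.concat hal
    · rcases Nat.lt_or_ge l.length j with hj | hj
      · have h1 : (l ++ [a]).take j = l ++ [a] := List.take_of_length_le (by simp; omega)
        have h2 : (l ++ [a]).toFinset = insert a l.toFinset := by
          ext b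
          simp
        rw [h1, h2, hat]
      · rw [List.take_append_of_le_length hj]
        exact hl j

/-- Edmonds' characterization: for submodular `f` with `f ∅ = 0`, a vector
`π` is an extreme point of the extended polymatroid `P_f` if and only if it is the greedy
vector of some enumeration `e` of `N`, i.e. `π (e_i) = f(S_i) - f(S_{i-1})` for all `i`. -/
theorem extreme_points_of_Pf_are_greedy_vectors
    {α : Type*} [Fintype α] [DecidableEq α]
    (f : Finset α → ℝ) (hf : f ∅ = 0)
    (hsub : ∀ S T : Finset α, f (S ∪ T) + f (S ∩ T) ≤ f S + f T) :
    ∀ π : α → ℝ,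
      π ∈ Set.extremePoints ℝ {p : α → ℝ | ∀ S : Finset α, ∑ i ∈ S, p i ≤ f S} ↔
      ∃ e : Fin (Fintype.card α) ≃ α, ∀ i : Fin (Fintype.card α),
        π (e i) = f (prefixSet e ((i : ℕ) + 1)) - f (prefixSet e (i : ℕ)) := by
  intro π
  constructor
  · intro hext
    obtain ⟨l, hnd, hlen, hl⟩ := exists_tight_list f hf hsub hext _ le_rfl
    have hmem : ∀ a, a ∈ l := by
      have h1 : l.toFinset = Finset.univ := by
        rw [← Finset.card_eq_iff_eq_univ, List.toFinset_card_of_nodup hnd, hlen]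
      intro a
      rw [← List.mem_toFinset, h1]
      exact Finset.mem_univ a
    let e : Fin (Fintype.card α) ≃ α :=
      (finCongr hlen.symm).trans (hnd.getEquivOfForallMemList l hmem)
    have hpre : ∀ k, prefixSet e k = (l.take k).toFinset := by
      intro k
      ext a
      obtain ⟨i, rfl⟩ := e.surjective a
      have he : ∀ j : Fin (Fintype.card α), e j = l[(j : ℕ)]'(by omega) := fun j => rfl
      rw [mem_prefixSet, Equiv.symm_apply_apply, List.mem_toFinset, List.mem_take_iff_getElem]
      constructor
      · intro h
        exact ⟨i, by omega, (he i).symm⟩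
      · rintro ⟨j, hj, hje⟩
        rw [he i, hnd.getElem_inj_iff] at hje
        omega
    refine ⟨e, fun i => ?_⟩
    have h1 := sum_prefixSet_succ e i π
    rw [hpre, hpre, hl, hl] at h1
    rw [hpre, hpre]
    linarith
  · rintro ⟨e, he⟩
    have htight := sum_prefixSet_of_greedy f hf e π he
    refine ⟨sum_le_of_greedy f hf hsub e π he, ?_⟩
    rintro x hx y hy ⟨s, t, hs, ht, hst, hxy⟩
    refine eq_of_sum_prefixSet_eq e fun k hk => ?_
    -- A convex combination of two values at most `f S_k` equals `f S_k` only if both do.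
    have h1 := hx (prefixSet e k)
    have h2 := hy (prefixSet e k)
    have h3 := htight k hk
    have h4 : ∑ a ∈ prefixSet e k, π a =
        s * ∑ a ∈ prefixSet e k, x a + t * ∑ a ∈ prefixSet e k, y a := by
      simp [← hxy, Finset.sum_add_distrib, Finset.mul_sum]
    have h5 : t * ∑ a ∈ prefixSet e k, y a ≤ t * f (prefixSet e k) :=
      mul_le_mul_of_nonneg_left h2 ht.le
    have h6 : s * f (prefixSet e k) ≤ s * ∑ a ∈ prefixSet e k, x a := by
      have : s * f (prefixSet e k) + t * f (prefixSet e k) = f (prefixSet e k) := by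
        rw [← add_mul, hst, one_mul]
      linarith
    have h7 := le_of_mul_le_mul_left h6 hs
    linarith
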